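/- Let k be a complete nonarchimedean valued field with nontrivial valuation, I and J sets, V and W families of Banach k-vector spaces indexed by I and J respectively, and f : ∏V → ⊕W a nonzero bounded k-linear map. Then for every r ∈ (0,∞) there exist r' > ‖f‖⁻¹ r, a finite set U₀ ⊆ β_ω I of ω₁-complete ultrafilters on I, and a finite subset J₀ ⊆ J such that f maps ∏^{U₀,r'} V := { x ∈ ∏V : for every 𝓕 ∈ U₀, {i : x(i) = 0} ∈ 𝓕, and ‖x(i)‖ ≤ r' for all i } into ⊕^{J₀,r} W := { y ∈ ⊕W : ‖y(j)‖ ≤ r for all j ∉ J₀ }. -/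

import Mathlib

open scoped ENNReal

/-- An ultrafilter is closed under countable intersections (ω₁-complete). -/
def CountablyComplete {α : Type*} (F : Ultrafilter α) : Prop :=
  ∀ s : ℕ → Set α, (∀ n, s n ∈ F) → (⋂ n, s n) ∈ F

theorem chase_norm_sub_le {E : Type*} [NormedAddCommGroup E] [IsUltrametricDist E] (a b : E) :
    ‖a - b‖ ≤ max ‖a‖ ‖b‖ := by
  rw [sub_eq_add_neg, ← norm_neg b]
  exact IsUltrametricDist.norm_add_le_max _ _

/-- Combinatorial part: an ideal of sets such that every decreasing sequence with empty
intersection eventually enters it is controlled by finitely many complete ultrafilters. -/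
theorem chase_ultra {I : Type*} (G : Set I → Prop)
    (hmono : ∀ A B, A ⊆ B → G B → G A)
    (hempty : G ∅)
    (hunion : ∀ A B, G A → G B → G (A ∪ B))
    (hkey : ∀ A : ℕ → Set I, Antitone A → (⋂ n, A n) = ∅ → ∃ n, G (A n)) :
    ∃ U : Set (Ultrafilter I), U.Finite ∧ (∀ F ∈ U, CountablyComplete F) ∧
      ∀ B : Set I, (∀ F ∈ U, Bᶜ ∈ F) → G B := by
  classical
  let nice : Set I → Prop := fun A => ∃ U : Set (Ultrafilter I), U.Finite ∧
    (∀ F ∈ U, CountablyComplete F) ∧ ∀ B : Set I, B ⊆ A → (∀ F ∈ U, Bᶜ ∈ F) → G B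
  have nice_union : ∀ A B, nice A → nice B → nice (A ∪ B) := by
    rintro A B ⟨U, hU, hUc, hUG⟩ ⟨U', hU', hUc', hUG'⟩
    refine ⟨U ∪ U', hU.union hU', ?_, ?_⟩
    · rintro F (h | h)
      · exact hUc F h
      · exact hUc' F h
    · intro C hC hF
      have h1 : G (C ∩ A) := hUG _ Set.inter_subset_right fun F h =>
        Filter.mem_of_superset (hF F (Or.inl h)) (Set.compl_subset_compl.2 Set.inter_subset_left)
      have h2 : G (C ∩ B) := hUG' _ Set.inter_subset_right fun F h =>
        Filter.mem_of_superset (hF F (Or.inr h)) (Set.compl_subset_compl.2 Set.inter_subset_left)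
      refine hmono _ _ ?_ (hunion _ _ h1 h2)
      intro c hc
      rcases hC hc with h | h
      · exact Or.inl ⟨hc, h⟩
      · exact Or.inr ⟨hc, h⟩
  have nice_G : ∀ A, G A → nice A := fun A hA =>
    ⟨∅, Set.finite_empty, by simp, fun B hB _ => hmono _ _ hB hA⟩
  have sigma : ∀ A : ℕ → Set I, (∀ n, G (A n)) → G (⋃ n, A n) := by
    intro A hA
    have hfin : ∀ n : ℕ, G (⋃ m ∈ Finset.range n, A m) := by
      intro n
      induction n with
      | zero => simpa using hempty
      | succ n ih =>
        refine hmono _ _ ?_ (hunion _ _ ih (hA n))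
        intro x hx
        simp only [Set.mem_iUnion, Finset.mem_range, Set.mem_union, exists_prop] at hx ⊢
        obtain ⟨m, hm, hx⟩ := hx
        rcases Nat.lt_succ_iff_lt_or_eq.1 hm with h | h
        · exact Or.inl ⟨m, h, hx⟩
        · exact Or.inr (h ▸ hx)
    obtain ⟨n, hn⟩ := hkey (fun n => (⋃ n, A n) \ ⋃ m ∈ Finset.range n, A m) (by
      intro a b hab x hx
      refine ⟨hx.1, fun h => hx.2 ?_⟩
      simp only [Set.mem_iUnion, Finset.mem_range, exists_prop] at h ⊢
      obtain ⟨m, hm, h⟩ := h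
      exact ⟨m, by omega, h⟩) (by
      ext x
      simp only [Set.mem_iInter, Set.mem_diff, Set.mem_iUnion, Finset.mem_range, exists_prop,
        Set.mem_empty_iff_false, iff_false]
      intro h
      obtain ⟨m, hm⟩ := (h 0).1
      exact (h (m+1)).2 ⟨m, by omega, hm⟩)
    refine hmono _ _ ?_ (hunion _ _ hn (hfin n))
    intro x hx
    by_cases h : x ∈ ⋃ m ∈ Finset.range n, A m
    · exact Or.inr h
    · exact Or.inl ⟨hx, h⟩
  have atom : ∀ A, ¬ G A → (∀ B, B ⊆ A → G B ∨ G (A \ B)) → nice A := by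
    intro A hA hat
    let L : Filter I :=
      { sets := {B | G (A \ B)}
        univ_sets := by simpa using hempty
        sets_of_superset := fun {x y} hx hxy => hmono _ _ (Set.diff_subset_diff_right hxy) hx
        inter_sets := fun {x y} hx hy => by
          have := hunion _ _ hx hy
          simp only [Set.mem_setOf_eq]
          rwa [Set.diff_inter] }
    have hL : ∀ B, B ∈ L ↔ G (A \ B) := fun B => Iff.rfl
    let F : Ultrafilter I := Ultrafilter.ofComplNotMemIff L (by
      intro s
      rw [hL, hL]
      constructor
      · intro h
        rcases hat (A \ s) Set.diff_subset with h1 | h1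
        · exact h1
        · refine absurd (hmono (A \ sᶜ) _ ?_ h1) h
          exact fun x hx => ⟨hx.1, fun h => hx.2 h.2⟩
      · intro h h'
        refine hA (hmono _ _ ?_ (hunion _ _ h h'))
        intro x hx
        by_cases hs : x ∈ s
        · exact Or.inr ⟨hx, fun h => h hs⟩
        · exact Or.inl ⟨hx, hs⟩)
    have hF : ∀ B, B ∈ F ↔ G (A \ B) := fun B => Iff.rfl
    refine ⟨{F}, Set.finite_singleton _, ?_, ?_⟩
    · rintro _ rfl s hs
      rw [hF, Set.diff_iInter]
      exact sigma _ fun n => (hF _).1 (hs n)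
    · intro B hB h
      have := (hF _).1 (h F rfl)
      refine hmono B (A \ Bᶜ) ?_ this
      exact fun x hx => ⟨hB hx, fun h => h hx⟩
  have step : ∀ A : Set I, ¬ nice A → ∃ B, B ⊆ A ∧ ¬ nice B ∧ ¬ G (A \ B) := by
    intro A hA
    have h1 : ¬ G A := fun h => hA (nice_G _ h)
    have h2 : ¬ ∀ B, B ⊆ A → G B ∨ G (A \ B) := fun h => hA (atom A h1 h)
    push Not at h2
    obtain ⟨B, hB, hG1, hG2⟩ := h2
    by_cases hn : nice B
    · refine ⟨A \ B, Set.diff_subset, fun h => hA ?_, ?_⟩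
      · have := nice_union _ _ hn h
        rwa [Set.union_diff_cancel hB] at this
      · rwa [Set.diff_diff_cancel_left hB]
    · exact ⟨B, hB, hn, hG2⟩
  have huniv : nice Set.univ := by
    by_contra hu
    choose! nx hnx1 hnx2 hnx3 using step
    let A : ℕ → Set I := fun n => nx^[n] Set.univ
    have hA : ∀ n, A (n+1) = nx (A n) := fun n => Function.iterate_succ_apply' _ _ _
    have hn : ∀ n, ¬ nice (A n) := by
      intro n
      induction n with
      | zero => exact hu
      | succ n ih => rw [hA]; exact hnx2 _ ih
    have hanti : Antitone A := antitone_nat_of_succ_le fun n => by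
      rw [hA]; exact hnx1 _ (hn n)
    obtain ⟨n, h⟩ := hkey (fun n => A n \ ⋂ m, A m)
      (fun a b hab => Set.diff_subset_diff_left (hanti hab)) (by
        ext x
        simp only [Set.mem_iInter, Set.mem_diff, Set.mem_empty_iff_false, iff_false]
        intro h
        exact (h 0).2 fun m => (h m).1)
    refine hnx3 _ (hn n) (hmono _ _ (Set.diff_subset_diff_right ?_) h)
    rw [← hA]
    exact Set.iInter_subset _ _
  obtain ⟨U, hU, hUc, h⟩ := huniv
  exact ⟨U, hU, hUc, fun B => h B (Set.subset_univ _)⟩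

/-- Analytic part: the gliding hump. -/
theorem chase_key
    {k : Type*} [NontriviallyNormedField k]
    {I J : Type*}
    (V : I → Type*) [∀ i, NormedAddCommGroup (V i)] [∀ i, NormedSpace k (V i)]
    [∀ i, IsUltrametricDist (V i)]
    (W : J → Type*) [∀ j, NormedAddCommGroup (W j)] [∀ j, NormedSpace k (W j)]
    [∀ j, IsUltrametricDist (W j)]
    (f : lp V ∞ →L[k] lp W ∞)
    (hf_range : ∀ x : lp V ∞, ∀ ε > (0 : ℝ), {j : J | ε < ‖f x j‖}.Finite)
    (r : ℝ) (hr : 0 < r) (hf : 0 < ‖f‖)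
    (A : ℕ → Set I) (hA : Antitone A) (hA0 : (⋂ n, A n) = ∅)
    (hbad : ∀ n, ∀ r' : ℝ, ‖f‖⁻¹ * r < r' → ∀ J₀ : Set J, J₀.Finite →
      ∃ x : lp V ∞, (∀ i ∉ A n, x i = 0) ∧ (∀ i, ‖x i‖ ≤ r') ∧ ∃ j ∉ J₀, r < ‖f x j‖) :
    False := by
  classical
  set ρ := ‖f‖⁻¹ * r with hρ
  have hρ0 : 0 < ρ := by positivity
  let S := {p : ℝ × Set J // ρ < p.1 ∧ p.2.Finite}
  choose X hX1 hX2 jj hj1 hj2 using fun n (s : S) => hbad n s.1.1 s.2.1 s.1.2 s.2.2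
  let next : ℕ → S → S := fun n s =>
    ⟨(min s.1.1 ((ρ + ‖f‖⁻¹ * ‖f (X n s) (jj n s)‖) / 2),
      s.1.2 ∪ {j | r < ‖f (X n s) j‖}), by
      refine ⟨lt_min s.2.1 ?_, s.2.2.union (hf_range _ r hr)⟩
      have : ρ < ‖f‖⁻¹ * ‖f (X n s) (jj n s)‖ :=
        mul_lt_mul_of_pos_left (hj2 n s) (by positivity)
      linarith⟩
  let st : ℕ → S := fun n => Nat.rec ⟨(ρ + 1, ∅), by simp⟩ next n
  have hst : ∀ n, st (n+1) = next n (st n) := fun n => rfl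
  let x : ℕ → lp V ∞ := fun n => X n (st n)
  let j : ℕ → J := fun n => jj n (st n)
  let R : ℕ → ℝ := fun n => (st n).1.1
  let K : ℕ → Set J := fun n => (st n).1.2
  have hx1 : ∀ n, ∀ i ∉ A n, x n i = 0 := fun n => hX1 n (st n)
  have hx2 : ∀ n i, ‖x n i‖ ≤ R n := fun n => hX2 n (st n)
  have hjK : ∀ n, j n ∉ K n := fun n => hj1 n (st n)
  have hjr : ∀ n, r < ‖f (x n) (j n)‖ := fun n => hj2 n (st n)
  have hR : ∀ n, ρ < R n := fun n => (st n).2.1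
  have hRs : ∀ n, R (n+1) = min (R n) ((ρ + ‖f‖⁻¹ * ‖f (x n) (j n)‖) / 2) := fun n => rfl
  have hKs : ∀ n, K (n+1) = K n ∪ {j | r < ‖f (x n) j‖} := fun n => rfl
  have hRa : Antitone R := antitone_nat_of_succ_le fun n => by rw [hRs]; exact min_le_left _ _
  have hKm : Monotone K := monotone_nat_of_le_succ fun n => by rw [hKs]; exact Set.subset_union_left
  have hRlt : ∀ n, ‖f‖ * R (n+1) < ‖f (x n) (j n)‖ := by
    intro n
    have h1 : ρ < ‖f‖⁻¹ * ‖f (x n) (j n)‖ :=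
      mul_lt_mul_of_pos_left (hjr n) (by positivity)
    have h2 : R (n+1) < ‖f‖⁻¹ * ‖f (x n) (j n)‖ := by
      rw [hRs]
      exact (min_le_right _ _).trans_lt (by linarith)
    calc _ < ‖f‖ * (‖f‖⁻¹ * ‖f (x n) (j n)‖) := mul_lt_mul_of_pos_left h2 hf
      _ = _ := by rw [mul_inv_cancel_left₀ hf.ne']
  have hN : ∀ i, ∃ N, i ∉ A N := by
    intro i
    by_contra h
    push Not at h
    have : i ∈ ⋂ n, A n := Set.mem_iInter.2 h
    rw [hA0] at this
    exact this
  choose N hN using hN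
  let t : ℕ → ∀ i, V i := fun m i => ∑ n ∈ Finset.range (N i), if m ≤ n then x n i else 0
  have htn : ∀ m i, ‖t m i‖ ≤ R m := by
    intro m i
    refine IsUltrametricDist.norm_sum_le_of_forall_le_of_nonneg (hρ0.trans (hR m)).le ?_
    intro n _
    split_ifs with h
    · exact (hx2 n i).trans (hRa h)
    · simpa using (hρ0.trans (hR m)).le
  have htm : ∀ m, Memℓp (t m) ∞ := fun m => memℓp_infty ⟨R m, by
    rintro _ ⟨i, rfl⟩; exact htn m i⟩
  let T : ℕ → lp V ∞ := fun m => ⟨t m, htm m⟩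
  have hTT : ∀ m, T (m+1) = T m - x m := by
    intro m
    ext i
    change t (m+1) i = t m i - x m i
    rw [eq_sub_iff_add_eq]
    have hxm : x m i = ∑ n ∈ Finset.range (N i), if n = m then x n i else 0 := by
      rw [Finset.sum_ite_eq']
      split_ifs with h
      · rfl
      · refine hx1 m i fun hi => hN i (hA ?_ hi)
        simpa using h
    rw [hxm, ← Finset.sum_add_distrib]
    refine Finset.sum_congr rfl fun n _ => ?_
    rcases lt_trichotomy n m with h | h | h
    · rw [if_neg (by omega), if_neg (by omega), if_neg (by omega), add_zero]
    · rw [if_neg (by omega), if_pos h, if_pos (by omega), zero_add]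
    · rw [if_pos (by omega), if_neg (by omega), if_pos (by omega), add_zero]
  have hfT : ∀ m l, f (T (m+1)) l = f (T m) l - f (x m) l := by
    intro m l
    rw [hTT, map_sub]; rfl
  have hind : ∀ m, ∀ l ∉ K m, ‖f (T m) l‖ ≤ max ‖f (T 0) l‖ r := by
    intro m
    induction m with
    | zero => intro l _; exact le_max_left _ _
    | succ m ih =>
      intro l hl
      rw [hKs] at hl
      have h1 : l ∉ K m := fun h => hl (Or.inl h)
      have h2 : ‖f (x m) l‖ ≤ r := not_lt.1 fun h => hl (Or.inr h)
      rw [hfT]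
      exact (chase_norm_sub_le _ _).trans
        (max_le (ih l h1) (h2.trans (le_max_right _ _)))
  have hbig : ∀ m, r < ‖f (T 0) (j m)‖ := by
    intro m
    by_contra h
    have h1 := (hind m (j m) (hjK m)).trans (max_le (not_lt.1 h) le_rfl)
    have h2 : ‖f (T (m+1)) (j m)‖ ≤ ‖f‖ * R (m+1) := by
      refine (lp.norm_apply_le_norm ENNReal.top_ne_zero _ _).trans ((f.le_opNorm _).trans ?_)
      gcongr
      exact lp.norm_le_of_forall_le (hρ0.trans (hR (m+1))).le (htn (m+1))
    have h3 : f (x m) (j m) = f (T m) (j m) - f (T (m+1)) (j m) := by rw [hfT]; abel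
    have h4 : ‖f (x m) (j m)‖ ≤ max ‖f (T m) (j m)‖ ‖f (T (m+1)) (j m)‖ := by
      conv_lhs => rw [h3]
      exact chase_norm_sub_le _ _
    have h5 := hjr m
    have h6 := hRlt m
    rcases le_max_iff.1 h4 with h | h <;> linarith
  have hinj : Function.Injective j := by
    have : ∀ a b, a < b → j a ≠ j b := by
      intro a b hab he
      refine hjK b (hKm (Nat.succ_le_of_lt hab) ?_)
      rw [← he]
      change j a ∈ K (a+1)
      rw [hKs]
      exact Or.inr (hjr a)
    intro a b hab
    rcases lt_trichotomy a b with h | h | h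
    · exact absurd hab (this _ _ h)
    · exact h
    · exact absurd hab.symm (this _ _ h)
  exact Set.infinite_of_injective_forall_mem hinj hbig (hf_range (T 0) r hr)

theorem nonarchimedean_chase_lemma_eda
    {k : Type*} [NontriviallyNormedField k] [CompleteSpace k] [IsUltrametricDist k]
    {I J : Type*}
    (V : I → Type*) [∀ i, NormedAddCommGroup (V i)] [∀ i, NormedSpace k (V i)]
    [∀ i, CompleteSpace (V i)] [∀ i, IsUltrametricDist (V i)]
    (W : J → Type*) [∀ j, NormedAddCommGroup (W j)] [∀ j, NormedSpace k (W j)]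
    [∀ j, CompleteSpace (W j)] [∀ j, IsUltrametricDist (W j)]
    (f : lp V ∞ →L[k] lp W ∞)
    (hf_range : ∀ x : lp V ∞, ∀ ε > (0 : ℝ), {j : J | ε < ‖f x j‖}.Finite)
    (hf_ne : f ≠ 0) :
    ∀ r : ℝ, 0 < r →
      ∃ r' : ℝ, ‖f‖⁻¹ * r < r' ∧
        ∃ U₀ : Set (Ultrafilter I), U₀.Finite ∧ (∀ F ∈ U₀, CountablyComplete F) ∧
          ∃ J₀ : Set J, J₀.Finite ∧
            ∀ x : lp V ∞, (∀ F ∈ U₀, {i : I | x i = 0} ∈ F) → (∀ i, ‖x i‖ ≤ r') →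
              ∀ j ∉ J₀, ‖f x j‖ ≤ r := by
  classical
  intro r hr
  have hf : 0 < ‖f‖ := norm_pos_iff.2 hf_ne
  set ρ := ‖f‖⁻¹ * r with hρ
  let G : Set I → Prop := fun A => ∃ r' : ℝ, ρ < r' ∧ ∃ J₀ : Set J, J₀.Finite ∧
    ∀ x : lp V ∞, (∀ i ∉ A, x i = 0) → (∀ i, ‖x i‖ ≤ r') → ∀ j ∉ J₀, ‖f x j‖ ≤ r
  have hmono : ∀ A B, A ⊆ B → G B → G A := by
    rintro A B hAB ⟨r', hr', J₀, hJ, h⟩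
    exact ⟨r', hr', J₀, hJ, fun x hx => h x fun i hi => hx i fun h => hi (hAB h)⟩
  have hempty : G ∅ := by
    refine ⟨ρ + 1, by linarith, ∅, Set.finite_empty, fun x hx _ j _ => ?_⟩
    have : x = 0 := by ext i; exact hx i (by simp)
    subst this
    simpa using hr.le
  have hunion : ∀ A B, G A → G B → G (A ∪ B) := by
    rintro A B ⟨r₁, hr₁, J₁, hJ₁, h₁⟩ ⟨r₂, hr₂, J₂, hJ₂, h₂⟩
    refine ⟨min r₁ r₂, lt_min hr₁ hr₂, J₁ ∪ J₂, hJ₁.union hJ₂, fun x hx hxn j hj => ?_⟩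
    let a : ∀ i, V i := fun i => if i ∈ A then x i else 0
    have ha : ∀ i, ‖a i‖ ≤ ‖x i‖ := by
      intro i
      by_cases h : i ∈ A <;> simp [a, h]
    let y : lp V ∞ := ⟨a, memℓp_infty ⟨‖x‖, by
      rintro _ ⟨i, rfl⟩
      exact (ha i).trans (lp.norm_apply_le_norm ENNReal.top_ne_zero _ _)⟩⟩
    have hy : ∀ i, y i = if i ∈ A then x i else 0 := fun i => rfl
    have hz : ∀ i, (x - y) i = if i ∈ A then 0 else x i := by
      intro i
      change x i - y i = _
      rw [hy]
      split_ifs <;> simp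
    have e1 := h₁ y (fun i hi => by rw [hy, if_neg hi])
      (fun i => (ha i).trans ((hxn i).trans (min_le_left _ _))) j (fun h => hj (Or.inl h))
    have e2 := h₂ (x - y) (fun i hi => by
        rw [hz]
        split_ifs with h
        · rfl
        · exact hx i (by rintro (h' | h') <;> contradiction))
      (fun i => by
        refine le_trans ?_ ((hxn i).trans (min_le_right _ _))
        rw [hz]
        split_ifs <;> simp) j (fun h => hj (Or.inr h))
    have e3 : f x j = f y j + f (x - y) j := by
      rw [map_sub]
      change f x j = f y j + (f x j - f y j)
      abel
    rw [e3]
    exact (IsUltrametricDist.norm_add_le_max _ _).trans (max_le e1 e2)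
  have hkey : ∀ A : ℕ → Set I, Antitone A → (⋂ n, A n) = ∅ → ∃ n, G (A n) := by
    intro A hA hA0
    by_contra hc
    push Not at hc
    refine chase_key V W f hf_range r hr hf A hA hA0 fun n r' hr' J₀ hJ₀ => ?_
    by_contra hcon
    push Not at hcon
    exact hc n ⟨r', hr', J₀, hJ₀, hcon⟩
  obtain ⟨U, hU, hUc, hUG⟩ := chase_ultra G hmono hempty hunion hkey
  by_contra hcon
  have hbad : ∀ r' : ℝ, ρ < r' → ∀ J₀ : Set J, J₀.Finite → ∃ x : lp V ∞,
      (∀ F ∈ U, {i : I | x i = 0} ∈ F) ∧ (∀ i, ‖x i‖ ≤ r') ∧ ∃ j ∉ J₀, r < ‖f x j‖ := by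
    intro r' hr' J₀ hJ₀
    by_contra h
    push Not at h
    exact hcon ⟨r', hr', U, hU, hUc, J₀, hJ₀, h⟩
  let S := {p : Set J // p.Finite}
  choose X hX1 hX2 jj hj1 hj2 using fun (n : ℕ) (s : S) =>
    hbad (ρ + 1 / ((n : ℝ) + 1)) (lt_add_of_pos_right _ (by positivity)) s.1 s.2
  let st : ℕ → S := fun n => Nat.rec ⟨∅, Set.finite_empty⟩
    (fun n s => ⟨insert (jj n s) s.1, s.2.insert _⟩) n
  let j : ℕ → J := fun n => jj n (st n)
  have hs : ∀ n, (st (n+1)).1 = insert (j n) (st n).1 := fun n => rfl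
  have hm : Monotone fun n => (st n).1 := monotone_nat_of_le_succ fun n => by
    rw [hs]; exact Set.subset_insert _ _
  have hinj : Function.Injective j := by
    have : ∀ a b, a < b → j a ≠ j b := by
      intro a b hab he
      refine hj1 b (st b) (hm (Nat.succ_le_of_lt hab) ?_)
      change jj b (st b) ∈ (st (a+1)).1
      rw [hs]
      exact Or.inl he.symm
    intro a b hab
    rcases lt_trichotomy a b with h | h | h
    · exact absurd hab (this _ _ h)
    · exact h
    · exact absurd hab.symm (this _ _ h)
  have hGS : G (⋃ n, {i | X n (st n) i = 0}ᶜ) := by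
    refine hUG _ fun F hF => ?_
    rw [Set.compl_iUnion]
    simp only [compl_compl]
    exact hUc F hF _ fun n => hX1 n (st n) F hF
  obtain ⟨r', hr', J₀, hJ₀, h⟩ := hGS
  obtain ⟨n₀, hn₀⟩ := exists_nat_one_div_lt (sub_pos.2 hr')
  have hfin : (j ⁻¹' J₀).Finite := hJ₀.preimage hinj.injOn
  obtain ⟨n, hn⟩ := (hfin.union (Set.finite_Iio n₀)).exists_notMem
  simp only [Set.mem_union, Set.mem_preimage, Set.mem_Iio, not_or, not_lt] at hn
  refine (hj2 n (st n)).not_ge (h _ ?_ ?_ _ hn.1)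
  · intro i hi
    by_contra hne
    exact hi (Set.mem_iUnion.2 ⟨n, hne⟩)
  · intro i
    refine (hX2 n (st n) i).trans ?_
    have : 1 / ((n : ℝ) + 1) ≤ 1 / ((n₀ : ℝ) + 1) := Nat.one_div_le_one_div hn.2
    linarith
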